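/- Let V = ⊕_{p,q} V^{p,q} be a bounded double complex of finite-dimensional complex vector spaces with differentials ∂, δ (∂²=δ²=∂δ+δ∂=0), d = ∂+δ. Define for each k: h_BC^k := Σ_{p+q=k} dim (ker∂∩kerδ∩V^{p,q})/(Im ∂δ ∩ V^{p,q}), h_A^k := Σ_{p+q=k} dim (ker ∂δ ∩ V^{p,q})/((Im∂ + Imδ) ∩ V^{p,q}), and b_k := dim (ker d ∩ V^k)/(Im d ∩ V^k) where V^k = ⊕_{p+q=k} V^{p,q}. Then h_BC^k + h_A^k ≥ 2 b_k for every k, with equality for all k if and only if ker∂ ∩ kerδ ∩ Im d = Im ∂δ. -/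

import Mathlib

open LinearMap

/-- Bott-Chern numbers in total degree `k` of a bounded double complex with
differentials `D = ∂`, `E = δ`. -/
noncomputable def bcSum {V : Type*} [AddCommGroup V] [Module ℂ V]
    (Vpq : ℕ → ℕ → Submodule ℂ V) (D E : V →ₗ[ℂ] V) (k : ℕ) : ℕ :=
  ∑ p ∈ Finset.range (k + 1),
    (Module.finrank ℂ ↥(ker D ⊓ ker E ⊓ Vpq p (k - p)) -
      Module.finrank ℂ ↥(range (D ∘ₗ E) ⊓ Vpq p (k - p)))

/-- Aeppli numbers in total degree `k`. -/
noncomputable def aSum {V : Type*} [AddCommGroup V] [Module ℂ V]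
    (Vpq : ℕ → ℕ → Submodule ℂ V) (D E : V →ₗ[ℂ] V) (k : ℕ) : ℕ :=
  ∑ p ∈ Finset.range (k + 1),
    (Module.finrank ℂ ↥(ker (D ∘ₗ E) ⊓ Vpq p (k - p)) -
      Module.finrank ℂ ↥((range D ⊔ range E) ⊓ Vpq p (k - p)))

/-- de Rham (total) Betti number in degree `k` for `d = D + E`. -/
noncomputable def bNum {V : Type*} [AddCommGroup V] [Module ℂ V]
    (Vpq : ℕ → ℕ → Submodule ℂ V) (D E : V →ₗ[ℂ] V) (k : ℕ) : ℕ :=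
  Module.finrank ℂ ↥(ker (D + E) ⊓ ⨆ p ∈ Finset.range (k + 1), Vpq p (k - p)) -
    Module.finrank ℂ ↥(range (D + E) ⊓ ⨆ p ∈ Finset.range (k + 1), Vpq p (k - p))

/-!
The spaces in degree `k` satisfy `dim (ker ∂ + ker δ) + dim (ker ∂ ∩ ker δ) = dim ker ∂ + dim ker δ`
and likewise for images. Since `ker ∂ + ker δ ≤ ker ∂δ` and `Im ∂δ ≤ Im ∂ ∩ Im δ`, this bounds
`h_BC + h_A` from below by `dim ker ∂ - dim Im ∂ + dim ker δ - dim Im δ`. The Frölicher inequality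
`dim ker d ≤ dim ker ∂` (the component of largest `p` of a `d`-closed form is `∂`-closed), together
with rank-nullity, bounds each of the two differences from below by `b`.

If equality holds for all `k`, all these inclusions are equalities, and equality in the Frölicher
inequality means that every homogeneous `∂`-closed `u` is the leading component of a `d`-closed
form, whence `δu ∈ Im ∂`. A `d`-exact form `da` with `∂δa = 0` is then `δu + ∂v` with `∂u = δv = 0`,
and both terms lie in `Im ∂ ∩ Im δ = Im ∂δ`. Conversely, the `∂δ`-lemma says that Bott-Chern
cohomology injects into de Rham cohomology, and it implies that de Rham cohomology surjects onto
Aeppli cohomology.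
-/

section GradedModule

open DirectSum

variable {ι κ R M : Type*} [Ring R] [AddCommGroup M] [Module R M]

section Projection

variable [DecidableEq ι] (ℳ : ι → Submodule R M) [Decomposition ℳ] {U U' : Submodule R M}
  {i j : ι} {x : M}

/-- The projection of a graded module onto its component of degree `i`, as an endomorphism. -/
noncomputable def gradedProj (i : ι) : M →ₗ[R] M :=
  (ℳ i).subtype ∘ₗ component R ι (fun i => ℳ i) i ∘ₗ (decomposeLinearEquiv ℳ).toLinearMap

theorem gradedProj_mem (i : ι) (x : M) : gradedProj ℳ i x ∈ ℳ i :=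
  Subtype.property _

variable {ℳ}

theorem gradedProj_of_mem (hx : x ∈ ℳ i) : gradedProj ℳ i x = x :=
  decompose_of_mem_same ℳ hx

theorem gradedProj_of_mem_ne (hx : x ∈ ℳ i) (hij : i ≠ j) : gradedProj ℳ j x = 0 :=
  decompose_of_mem_ne ℳ hx hij

variable (ℳ) in
theorem mem_of_forall_gradedProj_mem (hx : ∀ i, gradedProj ℳ i x ∈ U) : x ∈ U := by
  classical
  rw [← sum_support_decompose ℳ x]
  exact U.sum_mem fun i _ => hx i

theorem isHomogeneous_inf (hU : U.IsHomogeneous ℳ) (hU' : U'.IsHomogeneous ℳ) :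
    (U ⊓ U').IsHomogeneous ℳ :=
  fun i _ hx => ⟨hU i hx.1, hU' i hx.2⟩

theorem isHomogeneous_sup (hU : U.IsHomogeneous ℳ) (hU' : U'.IsHomogeneous ℳ) :
    (U ⊔ U').IsHomogeneous ℳ := by
  intro i x hx
  obtain ⟨y, hy, z, hz, rfl⟩ := Submodule.mem_sup.1 hx
  rw [decompose_add]
  exact Submodule.add_mem_sup (hU i hy) (hU' i hz)

theorem sup_inf_component_eq (hU : U.IsHomogeneous ℳ) (hU' : U'.IsHomogeneous ℳ) (i : ι) :
    (U ⊔ U') ⊓ ℳ i = U ⊓ ℳ i ⊔ U' ⊓ ℳ i := by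
  refine le_antisymm ?_ (sup_le (inf_le_inf_right _ le_sup_left) (inf_le_inf_right _ le_sup_right))
  rintro x ⟨hx, hxi⟩
  obtain ⟨y, hy, z, hz, rfl⟩ := Submodule.mem_sup.1 hx
  rw [← gradedProj_of_mem hxi, map_add]
  exact Submodule.add_mem_sup ⟨hU i hy, gradedProj_mem ℳ i y⟩ ⟨hU' i hz, gradedProj_mem ℳ i z⟩

theorem le_of_forall_inf_component_le (hU : U.IsHomogeneous ℳ) (h : ∀ i, U ⊓ ℳ i ≤ U') :
    U ≤ U' :=
  fun x hx => mem_of_forall_gradedProj_mem ℳ fun i => h i ⟨hU i hx, gradedProj_mem ℳ i x⟩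

end Projection

section HasDegree

variable [Add ι] {ℳ : ι → Submodule R M} {f g : M →ₗ[R] M} {e : ι}

variable (ℳ) in
/-- The endomorphism `f` of a graded module is homogeneous of degree `e`. -/
def HasDegree (f : M →ₗ[R] M) (e : ι) : Prop :=
  ∀ i, ∀ x ∈ ℳ i, f x ∈ ℳ (i + e)

theorem HasDegree.add (hf : HasDegree ℳ f e) (hg : HasDegree ℳ g e) : HasDegree ℳ (f + g) e :=
  fun i x hx => add_mem (hf i x hx) (hg i x hx)

variable [DecidableEq ι] [Decomposition ℳ] {i j : ι} {x : M}

theorem HasDegree.gradedProj_map_eq_zero (hf : HasDegree ℳ f e)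
    (hx : ∀ i, i + e = j → gradedProj ℳ i x = 0) : gradedProj ℳ j (f x) = 0 := by
  classical
  rw [← sum_support_decompose ℳ x, map_sum, map_sum]
  refine Finset.sum_eq_zero fun i _ => ?_
  by_cases hij : i + e = j
  · rw [show (decompose ℳ x i : M) = 0 from hx i hij, map_zero, map_zero]
  · exact gradedProj_of_mem_ne (hf i _ (decompose ℳ x i).2) hij

theorem HasDegree.range_inf_component_eq_bot (hf : HasDegree ℳ f e) (hj : ∀ i, i + e ≠ j) :
    range f ⊓ ℳ j = ⊥ := by
  rw [eq_bot_iff]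
  rintro _ ⟨⟨x, rfl⟩, hx⟩
  rw [Submodule.mem_bot, ← gradedProj_of_mem hx]
  exact hf.gradedProj_map_eq_zero fun i hi => absurd hi (hj i)

variable [IsRightCancelAdd ι]

theorem HasDegree.gradedProj_map (hf : HasDegree ℳ f e) (i : ι) (x : M) :
    gradedProj ℳ (i + e) (f x) = f (gradedProj ℳ i x) := by
  have hrest : gradedProj ℳ (i + e) (f (x - gradedProj ℳ i x)) = 0 := by
    refine hf.gradedProj_map_eq_zero fun j hj => ?_
    obtain rfl := add_right_cancel hj
    rw [map_sub, gradedProj_of_mem (gradedProj_mem ℳ j x), sub_self]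
  rwa [map_sub, map_sub, gradedProj_of_mem (hf i _ (gradedProj_mem ℳ i x)), sub_eq_zero] at hrest

theorem HasDegree.isHomogeneous_ker (hf : HasDegree ℳ f e) : (ker f).IsHomogeneous ℳ := by
  intro i x hx
  change f (gradedProj ℳ i x) = 0
  rw [← hf.gradedProj_map, mem_ker.1 hx, map_zero]

theorem HasDegree.isHomogeneous_range (hf : HasDegree ℳ f e) : (range f).IsHomogeneous ℳ := by
  rintro j _ ⟨x, rfl⟩
  change gradedProj ℳ j (f x) ∈ range f
  by_cases hj : ∃ i, i + e = j
  · obtain ⟨i, rfl⟩ := hj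
    exact ⟨gradedProj ℳ i x, (hf.gradedProj_map i x).symm⟩
  · rw [hf.gradedProj_map_eq_zero fun i hi => absurd ⟨i, hi⟩ hj]
    exact zero_mem _

theorem HasDegree.map_component_eq (hf : HasDegree ℳ f e) (i : ι) :
    (ℳ i).map f = range f ⊓ ℳ (i + e) := by
  ext y
  constructor
  · rintro ⟨x, hx, rfl⟩
    exact ⟨⟨x, rfl⟩, hf i x hx⟩
  · rintro ⟨⟨x, rfl⟩, hy⟩
    exact ⟨gradedProj ℳ i x, gradedProj_mem ℳ i x, by
      rw [← hf.gradedProj_map, gradedProj_of_mem hy]⟩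

end HasDegree

theorem HasDegree.comp [AddSemigroup ι] {ℳ : ι → Submodule R M} {f g : M →ₗ[R] M} {d e : ι}
    (hf : HasDegree ℳ f d) (hg : HasDegree ℳ g e) : HasDegree ℳ (f ∘ₗ g) (e + d) :=
  fun i x hx => add_assoc i e d ▸ hf _ _ (hg i x hx)

section Regrade

variable (ℳ : ι → Submodule R M) (φ : ι → κ)

/-- The grading of `M` obtained from `ℳ` by giving the elements of `ℳ i` the degree `φ i`. -/
def regrade (k : κ) : Submodule R M :=
  ⨆ i, ⨆ _ : φ i = k, ℳ i

theorem le_regrade {i : ι} {k : κ} (h : φ i = k) : ℳ i ≤ regrade ℳ φ k :=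
  le_iSup₂_of_le i h le_rfl

theorem regrade_regrade {ν : Type*} (ψ : κ → ν) :
    regrade (regrade ℳ φ) ψ = regrade ℳ (ψ ∘ φ) := by
  ext1 n
  refine le_antisymm (iSup₂_le fun k hk => iSup₂_le fun i hi => ?_) (iSup₂_le fun i hi => ?_)
  · exact le_regrade ℳ (ψ ∘ φ) (by rw [Function.comp_apply, hi, hk])
  · exact (le_regrade ℳ φ rfl).trans (le_regrade (regrade ℳ φ) ψ hi)

theorem isInternal_regrade [DecidableEq ι] [DecidableEq κ] (h : IsInternal ℳ) :
    IsInternal (regrade ℳ φ) := by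
  refine isInternal_submodule_of_iSupIndep_of_iSup_eq_top (fun k => ?_) ?_
  · have hdisj : Disjoint {i | φ i = k} {i | φ i ≠ k} :=
      Set.disjoint_left.2 fun _ hi hi' => hi' hi
    refine (h.submodule_iSupIndep.disjoint_biSup_biSup hdisj).mono_right ?_
    exact iSup₂_le fun l hl => iSup₂_le fun i hi =>
      le_iSup₂_of_le (f := fun i (_ : i ∈ {i | φ i ≠ k}) => ℳ i) i (by simpa [hi] using hl) le_rfl
  · rw [eq_top_iff, ← h.submodule_iSup_eq_top]
    exact iSup_le fun i => (le_regrade ℳ φ rfl).trans (le_iSup (regrade ℳ φ) (φ i))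

noncomputable instance [DecidableEq ι] [DecidableEq κ] [Decomposition ℳ] :
    Decomposition (regrade ℳ φ) :=
  (isInternal_regrade ℳ φ (Decomposition.isInternal ℳ)).chooseDecomposition

variable {ℳ φ} in
theorem gradedProj_of_mem_regrade_ne [DecidableEq ι] [Decomposition ℳ] {k : κ} {x : M} {i : ι}
    (hx : x ∈ regrade ℳ φ k) (hi : φ i ≠ k) : gradedProj ℳ i x = 0 := by
  suffices regrade ℳ φ k ≤ ker (gradedProj ℳ i) from mem_ker.1 (this hx)
  refine iSup₂_le fun j hj x hx => mem_ker.2 (gradedProj_of_mem_ne hx ?_)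
  rintro rfl
  exact hi hj

variable {ℳ} in
theorem HasDegree.regrade [AddZeroClass ι] [AddZeroClass κ] {f : M →ₗ[R] M} {e : ι}
    (hf : HasDegree ℳ f e) (φ : ι →+ κ) : HasDegree (regrade ℳ φ) f (φ e) := by
  intro k
  change _root_.regrade ℳ φ k ≤ (_root_.regrade ℳ φ (k + φ e)).comap f
  refine iSup₂_le fun i hi x hx => ?_
  exact le_regrade ℳ φ (by rw [map_add, hi]) (hf i x hx)

end Regrade

end GradedModule

section Dimension

open DirectSum Module

variable {ι K V N : Type*} [DivisionRing K] [AddCommGroup V] [Module K V]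
  [AddCommGroup N] [Module K N]

theorem finrank_map_add_finrank_inf_ker (f : V →ₗ[K] N) (U : Submodule K V)
    [FiniteDimensional K U] :
    finrank K (U.map f) + finrank K ↥(U ⊓ ker f) = finrank K U := by
  have hker : (ker (f.domRestrict U)).map U.subtype = U ⊓ ker f := by
    rw [ker_domRestrict, Submodule.map_comap_subtype]
  rw [← range_domRestrict, ← hker, Submodule.finrank_map_subtype_eq]
  exact finrank_range_add_finrank_ker _

section Leading

variable (π : ℕ → V →ₗ[K] N) (U : Submodule K V)

/-- The elements of `U` whose components `π p` vanish for all `p ≥ n`. -/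
def truncated (n : ℕ) : Submodule K V :=
  U ⊓ ⨅ p, ⨅ _ : n ≤ p, ker (π p)

/-- The values at `π n` of the elements of `U` all of whose components of larger index vanish. -/
def leadingTerms (n : ℕ) : Submodule K N :=
  (truncated π U (n + 1)).map (π n)

variable {π U}

theorem mem_truncated {n : ℕ} {x : V} : x ∈ truncated π U n ↔ x ∈ U ∧ ∀ p, n ≤ p → π p x = 0 := by
  simp only [truncated, Submodule.mem_inf, Submodule.mem_iInf, mem_ker]

theorem truncated_succ_inf_ker (n : ℕ) :
    truncated π U (n + 1) ⊓ ker (π n) = truncated π U n := by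
  ext x
  simp only [Submodule.mem_inf, mem_truncated, mem_ker, Nat.succ_le_iff, le_iff_lt_or_eq (a := n)]
  grind

theorem finrank_truncated_eq_sum [FiniteDimensional K U] (h : truncated π U 0 = ⊥) (n : ℕ) :
    finrank K (truncated π U n) = ∑ p ∈ Finset.range n, finrank K (leadingTerms π U p) := by
  induction n with
  | zero => rw [h, finrank_bot, Finset.sum_range_zero]
  | succ n ih =>
    have : FiniteDimensional K (truncated π U (n + 1)) :=
      Submodule.finiteDimensional_of_le (S₂ := U) inf_le_left
    have hrank := finrank_map_add_finrank_inf_ker (π n) (truncated π U (n + 1))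
    rw [truncated_succ_inf_ker] at hrank
    rw [Finset.sum_range_succ, ← ih]
    exact hrank.symm.trans (add_comm _ _)

end Leading

section GradedDim

variable (ℳ : ι → Submodule K V)

/-- The dimension of the degree `i` part of the submodule `U` of a graded vector space. -/
noncomputable def gradedDim (U : Submodule K V) (i : ι) : ℕ :=
  finrank K ↥(U ⊓ ℳ i)

variable {ℳ} {U U' : Submodule K V} {i : ι}

theorem gradedDim_mono [FiniteDimensional K (ℳ i)] (h : U ≤ U') :
    gradedDim ℳ U i ≤ gradedDim ℳ U' i :=
  Submodule.finrank_mono (inf_le_inf_right _ h)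

variable [DecidableEq ι] [Decomposition ℳ]

theorem gradedDim_sup_add_gradedDim_inf [FiniteDimensional K (ℳ i)] (hU : U.IsHomogeneous ℳ)
    (hU' : U'.IsHomogeneous ℳ) :
    gradedDim ℳ (U ⊔ U') i + gradedDim ℳ (U ⊓ U') i = gradedDim ℳ U i + gradedDim ℳ U' i := by
  simp only [gradedDim]
  rw [sup_inf_component_eq hU hU', inf_inf_distrib_right]
  exact Submodule.finrank_sup_add_finrank_inf_eq _ _

theorem eq_of_le_of_gradedDim_eq [∀ i, FiniteDimensional K (ℳ i)] (hU' : U'.IsHomogeneous ℳ)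
    (hle : U ≤ U') (h : ∀ i, gradedDim ℳ U i = gradedDim ℳ U' i) : U = U' := by
  refine le_antisymm hle (le_of_forall_inf_component_le hU' fun i => ?_)
  rw [← Submodule.eq_of_le_of_finrank_eq (inf_le_inf_right (ℳ i) hle) (h i)]
  exact inf_le_left

variable [Add ι] [IsRightCancelAdd ι] {f g : V →ₗ[K] V} {e : ι}

theorem HasDegree.gradedDim_range_add_gradedDim_ker [FiniteDimensional K (ℳ i)]
    (hf : HasDegree ℳ f e) :
    gradedDim ℳ (range f) (i + e) + gradedDim ℳ (ker f) i = finrank K (ℳ i) := by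
  rw [gradedDim, gradedDim, ← hf.map_component_eq, inf_comm]
  exact finrank_map_add_finrank_inf_ker f (ℳ i)

theorem HasDegree.gradedDim_range_le [∀ i, FiniteDimensional K (ℳ i)] (hf : HasDegree ℳ f e)
    (hg : HasDegree ℳ g e) (hker : ∀ i, gradedDim ℳ (ker g) i ≤ gradedDim ℳ (ker f) i) (j : ι) :
    gradedDim ℳ (range f) j ≤ gradedDim ℳ (range g) j := by
  by_cases hj : ∃ i, i + e = j
  · obtain ⟨i, rfl⟩ := hj
    have hrank_f := hf.gradedDim_range_add_gradedDim_ker (i := i)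
    have hrank_g := hg.gradedDim_range_add_gradedDim_ker (i := i)
    have hker_i := hker i
    omega
  · rw [gradedDim, hf.range_inf_component_eq_bot fun i hi => hj ⟨i, hi⟩, finrank_bot]
    exact Nat.zero_le _

end GradedDim

end Dimension

section Bigraded

open DirectSum Module

variable {K V : Type*} [DivisionRing K] [AddCommGroup V] [Module K V]

/-- The total degree `p + q` of a bidegree `(p, q)`. -/
def totalDegree : ℕ × ℕ →+ ℕ :=
  AddMonoidHom.fst ℕ ℕ + AddMonoidHom.snd ℕ ℕ

/-- The grading `V^k = ⨁_{p + q = k} V^{p,q}` by total degree. -/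
abbrev totalGrading (𝒱 : ℕ × ℕ → Submodule K V) : ℕ → Submodule K V :=
  regrade 𝒱 totalDegree

/-- The bigrading in which the roles of `p` and `q` are exchanged. -/
abbrev transposedGrading (𝒱 : ℕ × ℕ → Submodule K V) : ℕ × ℕ → Submodule K V :=
  regrade 𝒱 ((AddMonoidHom.snd ℕ ℕ).prod (AddMonoidHom.fst ℕ ℕ))

theorem totalGrading_transposedGrading (𝒱 : ℕ × ℕ → Submodule K V) :
    totalGrading (transposedGrading 𝒱) = totalGrading 𝒱 := by
  have htransposed : totalDegree ∘ (AddMonoidHom.snd ℕ ℕ).prod (AddMonoidHom.fst ℕ ℕ) =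
      totalDegree := funext fun i => Nat.add_comm i.2 i.1
  rw [totalGrading, regrade_regrade, htransposed]

theorem totalGrading_eq_iSup (𝒱 : ℕ × ℕ → Submodule K V) (k : ℕ) :
    totalGrading 𝒱 k = ⨆ p ∈ Finset.range (k + 1), 𝒱 (p, k - p) := by
  refine le_antisymm (iSup₂_le ?_) (iSup₂_le fun p hp => ?_)
  · rintro ⟨p, q⟩ rfl
    have hq : totalDegree (p, q) - p = q := Nat.add_sub_cancel_left p q
    exact le_iSup₂_of_le p (Finset.mem_range_succ_iff.2 (Nat.le_add_right p q)) (by rw [hq])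
  · exact le_regrade 𝒱 _ (Nat.add_sub_of_le (Finset.mem_range_succ_iff.1 hp))

theorem finiteDimensional_component {𝒱 : ℕ × ℕ → Submodule K V} {k p : ℕ}
    [FiniteDimensional K (totalGrading 𝒱 k)] (hp : p ≤ k) : FiniteDimensional K (𝒱 (p, k - p)) :=
  Submodule.finiteDimensional_of_le (le_regrade 𝒱 totalDegree (Nat.add_sub_of_le hp))

variable (𝒱 : ℕ × ℕ → Submodule K V) [Decomposition 𝒱]

/-- The bidegree `(p, k - p)` components of the elements of `U ∩ V^k` all of whose components of
bidegree `(p', k - p')` with `p' > p` vanish. -/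
noncomputable def leadingPart (U : Submodule K V) (k p : ℕ) : Submodule K V :=
  leadingTerms (fun p => gradedProj 𝒱 (p, k - p)) (U ⊓ totalGrading 𝒱 k) p

variable {𝒱} {U Z B : Submodule K V} {k p : ℕ} {x : V}

theorem mem_leadingPart : x ∈ leadingPart 𝒱 U k p ↔
    ∃ y ∈ U ⊓ totalGrading 𝒱 k, (∀ p', p < p' → gradedProj 𝒱 (p', k - p') y = 0) ∧
      gradedProj 𝒱 (p, k - p) y = x := by
  simp only [leadingPart, leadingTerms, Submodule.mem_map, mem_truncated, Nat.succ_le_iff,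
    and_assoc]

theorem leadingPart_eq_of_isHomogeneous (hU : U.IsHomogeneous 𝒱) (hp : p ≤ k) :
    leadingPart 𝒱 U k p = U ⊓ 𝒱 (p, k - p) := by
  ext x
  rw [mem_leadingPart]
  constructor
  · rintro ⟨y, hy, -, rfl⟩
    exact ⟨hU _ hy.1, gradedProj_mem 𝒱 _ y⟩
  · rintro ⟨hxU, hx⟩
    refine ⟨x, ⟨hxU, le_regrade 𝒱 _ (Nat.add_sub_of_le hp) hx⟩, fun p' hp' => ?_,
      gradedProj_of_mem hx⟩
    exact gradedProj_of_mem_ne hx fun h => hp'.ne (congrArg Prod.fst h)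

theorem gradedDim_totalGrading_eq_sum_leadingPart [FiniteDimensional K (totalGrading 𝒱 k)] :
    gradedDim (totalGrading 𝒱) U k =
      ∑ p ∈ Finset.range (k + 1), finrank K (leadingPart 𝒱 U k p) := by
  have hbot : truncated (fun p => gradedProj 𝒱 (p, k - p)) (U ⊓ totalGrading 𝒱 k) 0 = ⊥ := by
    refine eq_bot_iff.2 fun x hx => mem_of_forall_gradedProj_mem 𝒱 fun i => ?_
    obtain ⟨hxk, hx⟩ := mem_truncated.1 hx
    rw [Submodule.mem_bot]
    by_cases hi : totalDegree i = k
    · have hi' : (i.1, k - i.1) = i := Prod.ext rfl (hi ▸ Nat.add_sub_cancel_left i.1 i.2)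
      exact hi' ▸ hx i.1 (Nat.zero_le _)
    · exact gradedProj_of_mem_regrade_ne hxk.2 hi
  have htop : truncated (fun p => gradedProj 𝒱 (p, k - p)) (U ⊓ totalGrading 𝒱 k) (k + 1) =
      U ⊓ totalGrading 𝒱 k := by
    refine le_antisymm inf_le_left fun x hx => mem_truncated.2 ⟨hx, fun p hp => ?_⟩
    exact gradedProj_of_mem_regrade_ne hx.2 ((Nat.lt_of_lt_of_le hp (Nat.le_add_right _ _)).ne')
  rw [gradedDim, ← htop]
  exact finrank_truncated_eq_sum hbot (k + 1)

theorem gradedDim_totalGrading_eq_sum [FiniteDimensional K (totalGrading 𝒱 k)]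
    (hU : U.IsHomogeneous 𝒱) :
    gradedDim (totalGrading 𝒱) U k =
      ∑ p ∈ Finset.range (k + 1), gradedDim 𝒱 U (p, k - p) := by
  rw [gradedDim_totalGrading_eq_sum_leadingPart]
  refine Finset.sum_congr rfl fun p hp => ?_
  rw [leadingPart_eq_of_isHomogeneous hU (Finset.mem_range_succ_iff.1 hp), gradedDim]

theorem sum_gradedDim_sub_add_gradedDim [FiniteDimensional K (totalGrading 𝒱 k)]
    (hZ : Z.IsHomogeneous 𝒱) (hB : B.IsHomogeneous 𝒱) (hBZ : B ≤ Z) :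
    ∑ p ∈ Finset.range (k + 1), (gradedDim 𝒱 Z (p, k - p) - gradedDim 𝒱 B (p, k - p)) +
      gradedDim (totalGrading 𝒱) B k = gradedDim (totalGrading 𝒱) Z k := by
  have hle : ∀ p ∈ Finset.range (k + 1),
      gradedDim 𝒱 B (p, k - p) ≤ gradedDim 𝒱 Z (p, k - p) := fun p hp =>
    have := finiteDimensional_component (𝒱 := 𝒱) (Finset.mem_range_succ_iff.1 hp)
    gradedDim_mono hBZ
  rw [gradedDim_totalGrading_eq_sum hZ, gradedDim_totalGrading_eq_sum hB,
    Finset.sum_tsub_distrib _ hle, tsub_add_cancel_of_le (Finset.sum_le_sum hle)]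

end Bigraded

section DoubleComplex

open DirectSum Module

variable {K V : Type*} [DivisionRing K] [AddCommGroup V] [Module K V]

/-- `(V^{p,q}, ∂, δ)` is a first-quadrant double complex with `D = ∂` of bidegree `(1, 0)` and
`E = δ` of bidegree `(0, 1)`. That the `V^{p,q}` form a bigrading of `V` is expressed separately, by
`DirectSum.IsInternal` or `DirectSum.Decomposition`. -/
structure IsDoubleComplex (𝒱 : ℕ × ℕ → Submodule K V) (D E : V →ₗ[K] V) : Prop where
  hasDegree_left : HasDegree 𝒱 D (1, 0)
  hasDegree_right : HasDegree 𝒱 E (0, 1)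
  left_comp_left : D ∘ₗ D = 0
  right_comp_right : E ∘ₗ E = 0
  left_comp_right_add_right_comp_left : D ∘ₗ E + E ∘ₗ D = 0

section Numbers

variable (𝒱 : ℕ × ℕ → Submodule K V) (D E : V →ₗ[K] V) (k : ℕ)

/-- The Bott-Chern number `h_BC^k`, for a double complex with finite-dimensional `V^k`. -/
noncomputable def bottChernNumber : ℕ :=
  ∑ p ∈ Finset.range (k + 1),
    (gradedDim 𝒱 (ker D ⊓ ker E) (p, k - p) - gradedDim 𝒱 (range (D ∘ₗ E)) (p, k - p))

/-- The Aeppli number `h_A^k`, for a double complex with finite-dimensional `V^k`. -/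
noncomputable def aeppliNumber : ℕ :=
  ∑ p ∈ Finset.range (k + 1),
    (gradedDim 𝒱 (ker (D ∘ₗ E)) (p, k - p) - gradedDim 𝒱 (range D ⊔ range E) (p, k - p))

/-- The Betti number `b_k` of the total complex, with differential `D + E`, of a double complex
with finite-dimensional `V^k`. -/
noncomputable def bettiNumber : ℕ :=
  gradedDim (totalGrading 𝒱) (ker (D + E)) k - gradedDim (totalGrading 𝒱) (range (D + E)) k

end Numbers

namespace IsDoubleComplex

variable {𝒱 : ℕ × ℕ → Submodule K V} {D E : V →ₗ[K] V} (h : IsDoubleComplex 𝒱 D E)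

include h

theorem left_left (x : V) : D (D x) = 0 :=
  LinearMap.congr_fun h.left_comp_left x

theorem right_right (x : V) : E (E x) = 0 :=
  LinearMap.congr_fun h.right_comp_right x

theorem right_left (x : V) : E (D x) = -D (E x) :=
  eq_neg_of_add_eq_zero_right (LinearMap.congr_fun h.left_comp_right_add_right_comp_left x)

protected theorem transpose : IsDoubleComplex (transposedGrading 𝒱) E D where
  hasDegree_left := h.hasDegree_right.regrade _
  hasDegree_right := h.hasDegree_left.regrade _
  left_comp_left := h.right_comp_right
  right_comp_right := h.left_comp_left
  left_comp_right_add_right_comp_left := by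
    rw [add_comm, h.left_comp_right_add_right_comp_left]

theorem hasDegree_comp : HasDegree 𝒱 (D ∘ₗ E) (1, 1) :=
  h.hasDegree_left.comp h.hasDegree_right

theorem hasDegree_total_left : HasDegree (totalGrading 𝒱) D 1 :=
  h.hasDegree_left.regrade totalDegree

theorem hasDegree_total_right : HasDegree (totalGrading 𝒱) E 1 :=
  h.hasDegree_right.regrade totalDegree

theorem hasDegree_total_add : HasDegree (totalGrading 𝒱) (D + E) 1 :=
  h.hasDegree_total_left.add h.hasDegree_total_right

theorem range_comp_le_ker_inf_ker : range (D ∘ₗ E) ≤ ker D ⊓ ker E := by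
  rintro _ ⟨x, rfl⟩
  exact ⟨h.left_left _, by simp [h.right_left, h.right_right]⟩

theorem range_sup_range_le_ker_comp : range D ⊔ range E ≤ ker (D ∘ₗ E) := by
  refine sup_le ?_ ?_
  · rintro _ ⟨x, rfl⟩
    simp [h.right_left, h.left_left]
  · rintro _ ⟨x, rfl⟩
    simp [h.right_right]

theorem range_add_le_ker_add : range (D + E) ≤ ker (D + E) := by
  rintro _ ⟨x, rfl⟩
  simp [h.left_left, h.right_right, h.right_left]

theorem ker_sup_ker_le_ker_comp : ker D ⊔ ker E ≤ ker (D ∘ₗ E) := by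
  refine sup_le (fun x hx => ?_) (ker_le_ker_comp E D)
  rw [mem_ker, LinearMap.comp_apply, ← neg_eq_zero, ← h.right_left, mem_ker.1 hx, map_zero]

theorem range_comp_le_range_inf_range : range (D ∘ₗ E) ≤ range D ⊓ range E := by
  refine le_inf (range_comp_le_range E D) ?_
  rintro _ ⟨x, rfl⟩
  exact ⟨-D x, by rw [map_neg, h.right_left, neg_neg, LinearMap.comp_apply]⟩

theorem range_comp_le_range_add : range (D ∘ₗ E) ≤ range (D + E) := by
  rintro _ ⟨x, rfl⟩
  exact ⟨E x, by simp [h.right_right]⟩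

theorem ker_comp_le_of_ddbar (hddbar : ker D ⊓ ker E ⊓ range (D + E) = range (D ∘ₗ E)) :
    ker (D ∘ₗ E) ≤ ker (D + E) ⊔ (range D ⊔ range E) := by
  intro a ha
  have ha' : D (E a) = 0 := ha
  have hda : (D + E) a ∈ range (D ∘ₗ E) := by
    rw [← hddbar]
    exact ⟨⟨by simp [h.left_left, ha'], by simp [h.right_left, h.right_right, ha']⟩, ⟨a, rfl⟩⟩
  obtain ⟨b, hb⟩ := hda
  have hclosed : a - E b ∈ ker (D + E) := by
    rw [mem_ker, map_sub, ← hb]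
    simp [h.right_right]
  rw [← sub_add_cancel a (E b)]
  exact Submodule.add_mem_sup hclosed (Submodule.mem_sup_right ⟨b, rfl⟩)

theorem inf_range_add_le_range_comp (hker : ker (D ∘ₗ E) = ker D ⊔ ker E)
    (hrange : range D ⊓ range E = range (D ∘ₗ E)) (hleft : ker D ≤ (range D).comap E)
    (hright : ker E ≤ (range E).comap D) :
    ker D ⊓ ker E ⊓ range (D + E) ≤ range (D ∘ₗ E) := by
  rintro _ ⟨⟨hD, -⟩, a, rfl⟩
  have ha : a ∈ ker D ⊔ ker E := by
    rw [← hker]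
    simpa [h.left_left] using hD
  obtain ⟨u, hu, v, hv, rfl⟩ := Submodule.mem_sup.1 ha
  have hsum : (D + E) (u + v) = E u + D v := by
    simp [mem_ker.1 hu, mem_ker.1 hv, add_comm]
  rw [hsum, ← hrange]
  exact add_mem ⟨hleft hu, ⟨u, rfl⟩⟩ ⟨⟨v, rfl⟩, hright hv⟩

section Dimension

variable {k p : ℕ}

theorem bettiNumber_add_gradedDim [FiniteDimensional K (totalGrading 𝒱 k)] :
    bettiNumber 𝒱 D E k + gradedDim (totalGrading 𝒱) (range (D + E)) k =
      gradedDim (totalGrading 𝒱) (ker (D + E)) k :=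
  Nat.sub_add_cancel (gradedDim_mono h.range_add_le_ker_add)

variable [Decomposition 𝒱]

theorem leadingPart_ker_add_le :
    leadingPart 𝒱 (ker (D + E)) k p ≤ ker D ⊓ 𝒱 (p, k - p) := by
  intro x hx
  obtain ⟨y, ⟨hy, -⟩, hlead, rfl⟩ := mem_leadingPart.1 hx
  refine ⟨?_, gradedProj_mem 𝒱 _ y⟩
  have hEy : gradedProj 𝒱 (p + 1, k - p) (E y) = 0 := by
    refine h.hasDegree_right.gradedProj_map_eq_zero fun ⟨p', q⟩ hi => ?_
    obtain ⟨rfl, hq⟩ := Prod.mk.inj hi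
    obtain rfl : q = k - (p + 1) := by grind
    exact hlead (p + 1) p.lt_succ_self
  have hDy : D y = -E y := eq_neg_of_add_eq_zero_left hy
  rw [SetLike.mem_coe, mem_ker, ← h.hasDegree_left.gradedProj_map, hDy, map_neg]
  exact neg_eq_zero.2 hEy

theorem finrank_leadingPart_ker_add_le [FiniteDimensional K (totalGrading 𝒱 k)]
    (hp : p ∈ Finset.range (k + 1)) :
    finrank K (leadingPart 𝒱 (ker (D + E)) k p) ≤ gradedDim 𝒱 (ker D) (p, k - p) :=
  have := finiteDimensional_component (𝒱 := 𝒱) (Finset.mem_range_succ_iff.1 hp)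
  Submodule.finrank_mono h.leadingPart_ker_add_le

theorem gradedDim_ker_add_le_left [FiniteDimensional K (totalGrading 𝒱 k)] :
    gradedDim (totalGrading 𝒱) (ker (D + E)) k ≤ gradedDim (totalGrading 𝒱) (ker D) k := by
  rw [gradedDim_totalGrading_eq_sum_leadingPart,
    gradedDim_totalGrading_eq_sum h.hasDegree_left.isHomogeneous_ker]
  exact Finset.sum_le_sum fun p => h.finrank_leadingPart_ker_add_le

theorem leadingPart_ker_add_eq [FiniteDimensional K (totalGrading 𝒱 k)] (hp : p ≤ k)
    (hdim : gradedDim (totalGrading 𝒱) (ker (D + E)) k = gradedDim (totalGrading 𝒱) (ker D) k) :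
    leadingPart 𝒱 (ker (D + E)) k p = ker D ⊓ 𝒱 (p, k - p) := by
  rw [gradedDim_totalGrading_eq_sum_leadingPart,
    gradedDim_totalGrading_eq_sum h.hasDegree_left.isHomogeneous_ker,
    Finset.sum_eq_sum_iff_of_le fun p => h.finrank_leadingPart_ker_add_le] at hdim
  have := finiteDimensional_component (𝒱 := 𝒱) hp
  exact Submodule.eq_of_le_of_finrank_eq h.leadingPart_ker_add_le
    (hdim p (Finset.mem_range_succ_iff.2 hp))

theorem ker_le_comap_range_left [∀ k, FiniteDimensional K (totalGrading 𝒱 k)]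
    (hdim : ∀ k, gradedDim (totalGrading 𝒱) (ker (D + E)) k =
      gradedDim (totalGrading 𝒱) (ker D) k) :
    ker D ≤ (range D).comap E := by
  refine le_of_forall_inf_component_le h.hasDegree_left.isHomogeneous_ker fun ⟨p, q⟩ u hu => ?_
  have hlead := h.leadingPart_ker_add_eq (Nat.le_add_right p q) (hdim (p + q))
  rw [Nat.add_sub_cancel_left] at hlead
  rw [← hlead, mem_leadingPart, Nat.add_sub_cancel_left] at hu
  obtain ⟨y, ⟨hy, -⟩, -, rfl⟩ := hu
  have hEy : E y = -D y := eq_neg_of_add_eq_zero_right hy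
  rw [Submodule.mem_comap, ← h.hasDegree_right.gradedProj_map, hEy]
  exact h.hasDegree_left.isHomogeneous_range _ (neg_mem ⟨y, rfl⟩)

theorem gradedDim_ker_add_le_right [FiniteDimensional K (totalGrading 𝒱 k)] :
    gradedDim (totalGrading 𝒱) (ker (D + E)) k ≤ gradedDim (totalGrading 𝒱) (ker E) k := by
  rw [← totalGrading_transposedGrading, add_comm D E] at *
  exact h.transpose.gradedDim_ker_add_le_left

theorem ker_le_comap_range_right [∀ k, FiniteDimensional K (totalGrading 𝒱 k)]
    (hdim : ∀ k, gradedDim (totalGrading 𝒱) (ker (D + E)) k =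
      gradedDim (totalGrading 𝒱) (ker E) k) :
    ker E ≤ (range E).comap D := by
  rw [← totalGrading_transposedGrading, add_comm D E] at *
  exact h.transpose.ker_le_comap_range_left hdim

theorem bottChernNumber_add_gradedDim [FiniteDimensional K (totalGrading 𝒱 k)] :
    bottChernNumber 𝒱 D E k + gradedDim (totalGrading 𝒱) (range (D ∘ₗ E)) k =
      gradedDim (totalGrading 𝒱) (ker D ⊓ ker E) k :=
  sum_gradedDim_sub_add_gradedDim
    (isHomogeneous_inf h.hasDegree_left.isHomogeneous_ker h.hasDegree_right.isHomogeneous_ker)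
    h.hasDegree_comp.isHomogeneous_range h.range_comp_le_ker_inf_ker

theorem aeppliNumber_add_gradedDim [FiniteDimensional K (totalGrading 𝒱 k)] :
    aeppliNumber 𝒱 D E k + gradedDim (totalGrading 𝒱) (range D ⊔ range E) k =
      gradedDim (totalGrading 𝒱) (ker (D ∘ₗ E)) k :=
  sum_gradedDim_sub_add_gradedDim h.hasDegree_comp.isHomogeneous_ker
    (isHomogeneous_sup h.hasDegree_left.isHomogeneous_range h.hasDegree_right.isHomogeneous_range)
    h.range_sup_range_le_ker_comp

section Main

variable [∀ k, FiniteDimensional K (totalGrading 𝒱 k)]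

-- All the truncated differences are differences of dimensions of nested spaces, or are
-- nonnegative by the Frölicher inequalities, so that the identity also holds over `ℤ`.
theorem bottChernNumber_add_aeppliNumber_eq (k : ℕ) :
    bottChernNumber 𝒱 D E k + aeppliNumber 𝒱 D E k = 2 * bettiNumber 𝒱 D E k +
      (gradedDim (totalGrading 𝒱) (ker (D ∘ₗ E)) k -
        gradedDim (totalGrading 𝒱) (ker D ⊔ ker E) k) +
      (gradedDim (totalGrading 𝒱) (range D ⊓ range E) k -
        gradedDim (totalGrading 𝒱) (range (D ∘ₗ E)) k) +
      (gradedDim (totalGrading 𝒱) (ker D) k - gradedDim (totalGrading 𝒱) (ker (D + E)) k) +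
      (gradedDim (totalGrading 𝒱) (ker E) k - gradedDim (totalGrading 𝒱) (ker (D + E)) k) +
      (gradedDim (totalGrading 𝒱) (range (D + E)) k - gradedDim (totalGrading 𝒱) (range D) k) +
      (gradedDim (totalGrading 𝒱) (range (D + E)) k - gradedDim (totalGrading 𝒱) (range E) k) := by
  have hbc := h.bottChernNumber_add_gradedDim (k := k)
  have ha := h.aeppliNumber_add_gradedDim (k := k)
  have hb := h.bettiNumber_add_gradedDim (k := k)
  have hker_sup := gradedDim_sup_add_gradedDim_inf (i := k)
    h.hasDegree_total_left.isHomogeneous_ker h.hasDegree_total_right.isHomogeneous_ker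
  have hrange_sup := gradedDim_sup_add_gradedDim_inf (i := k)
    h.hasDegree_total_left.isHomogeneous_range h.hasDegree_total_right.isHomogeneous_range
  have hker := gradedDim_mono (ℳ := totalGrading 𝒱) (i := k) h.ker_sup_ker_le_ker_comp
  have hrange := gradedDim_mono (ℳ := totalGrading 𝒱) (i := k) h.range_comp_le_range_inf_range
  have hker_left := h.gradedDim_ker_add_le_left (k := k)
  have hker_right := h.gradedDim_ker_add_le_right (k := k)
  have hrange_left := h.hasDegree_total_left.gradedDim_range_le h.hasDegree_total_add
    (fun i => h.gradedDim_ker_add_le_left) k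
  have hrange_right := h.hasDegree_total_right.gradedDim_range_le h.hasDegree_total_add
    (fun i => h.gradedDim_ker_add_le_right) k
  omega

theorem two_mul_bettiNumber_le (k : ℕ) :
    2 * bettiNumber 𝒱 D E k ≤ bottChernNumber 𝒱 D E k + aeppliNumber 𝒱 D E k := by
  have := h.bottChernNumber_add_aeppliNumber_eq k
  omega

theorem inf_range_add_eq_range_comp_of_eq
    (heq : ∀ k, bottChernNumber 𝒱 D E k + aeppliNumber 𝒱 D E k = 2 * bettiNumber 𝒱 D E k) :
    ker D ⊓ ker E ⊓ range (D + E) = range (D ∘ₗ E) := by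
  have hdefect k := (h.bottChernNumber_add_aeppliNumber_eq k).symm.trans (heq k)
  have htotal_comp : HasDegree (totalGrading 𝒱) (D ∘ₗ E) 2 := h.hasDegree_comp.regrade totalDegree
  have hker : ker D ⊔ ker E = ker (D ∘ₗ E) :=
    eq_of_le_of_gradedDim_eq htotal_comp.isHomogeneous_ker h.ker_sup_ker_le_ker_comp fun k =>
      (gradedDim_mono h.ker_sup_ker_le_ker_comp).antisymm (by have := hdefect k; omega)
  have hrange : range (D ∘ₗ E) = range D ⊓ range E :=
    eq_of_le_of_gradedDim_eq (isHomogeneous_inf h.hasDegree_total_left.isHomogeneous_range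
        h.hasDegree_total_right.isHomogeneous_range) h.range_comp_le_range_inf_range fun k =>
      (gradedDim_mono h.range_comp_le_range_inf_range).antisymm (by have := hdefect k; omega)
  have hleft : ker D ≤ (range D).comap E := h.ker_le_comap_range_left fun k =>
    h.gradedDim_ker_add_le_left.antisymm (by have := hdefect k; omega)
  have hright : ker E ≤ (range E).comap D := h.ker_le_comap_range_right fun k =>
    h.gradedDim_ker_add_le_right.antisymm (by have := hdefect k; omega)
  exact (h.inf_range_add_le_range_comp hker.symm hrange.symm hleft hright).antisymm
    (le_inf h.range_comp_le_ker_inf_ker h.range_comp_le_range_add)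

theorem bottChernNumber_le_bettiNumber
    (hddbar : ker D ⊓ ker E ⊓ range (D + E) = range (D ∘ₗ E)) (k : ℕ) :
    bottChernNumber 𝒱 D E k ≤ bettiNumber 𝒱 D E k := by
  have hbc := h.bottChernNumber_add_gradedDim (k := k)
  have hb := h.bettiNumber_add_gradedDim (k := k)
  have hle : ker D ⊓ ker E ⊔ range (D + E) ≤ ker (D + E) :=
    sup_le (fun x hx => by simp [mem_ker.1 hx.1, mem_ker.1 hx.2]) h.range_add_le_ker_add
  have hmono := gradedDim_mono (ℳ := totalGrading 𝒱) (i := k) hle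
  have hsup := gradedDim_sup_add_gradedDim_inf (i := k)
    (isHomogeneous_inf h.hasDegree_total_left.isHomogeneous_ker
      h.hasDegree_total_right.isHomogeneous_ker) h.hasDegree_total_add.isHomogeneous_range
  rw [hddbar] at hsup
  omega

theorem aeppliNumber_le_bettiNumber
    (hddbar : ker D ⊓ ker E ⊓ range (D + E) = range (D ∘ₗ E)) (k : ℕ) :
    aeppliNumber 𝒱 D E k ≤ bettiNumber 𝒱 D E k := by
  have ha := h.aeppliNumber_add_gradedDim (k := k)
  have hb := h.bettiNumber_add_gradedDim (k := k)
  have hle : range (D + E) ≤ ker (D + E) ⊓ (range D ⊔ range E) := by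
    refine le_inf h.range_add_le_ker_add ?_
    rintro _ ⟨x, rfl⟩
    exact Submodule.add_mem_sup ⟨x, rfl⟩ ⟨x, rfl⟩
  have hmono_range := gradedDim_mono (ℳ := totalGrading 𝒱) (i := k) hle
  have hmono_ker :=
    gradedDim_mono (ℳ := totalGrading 𝒱) (i := k) (h.ker_comp_le_of_ddbar hddbar)
  have hsup := gradedDim_sup_add_gradedDim_inf (i := k) h.hasDegree_total_add.isHomogeneous_ker
    (isHomogeneous_sup h.hasDegree_total_left.isHomogeneous_range
      h.hasDegree_total_right.isHomogeneous_range)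
  omega

end Main

end Dimension

end IsDoubleComplex

theorem stmt17_general {𝒱 : ℕ × ℕ → Submodule K V} (hinternal : IsInternal 𝒱)
    [∀ k, FiniteDimensional K (totalGrading 𝒱 k)] {D E : V →ₗ[K] V} (h : IsDoubleComplex 𝒱 D E) :
    (∀ k, 2 * bettiNumber 𝒱 D E k ≤ bottChernNumber 𝒱 D E k + aeppliNumber 𝒱 D E k) ∧
    ((∀ k, bottChernNumber 𝒱 D E k + aeppliNumber 𝒱 D E k = 2 * bettiNumber 𝒱 D E k) ↔
      ker D ⊓ ker E ⊓ range (D + E) = range (D ∘ₗ E)) := by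
  let := hinternal.chooseDecomposition
  refine ⟨h.two_mul_bettiNumber_le, h.inf_range_add_eq_range_comp_of_eq, fun hddbar k => ?_⟩
  have hbc := h.bottChernNumber_le_bettiNumber hddbar k
  have ha := h.aeppliNumber_le_bettiNumber hddbar k
  have hle := h.two_mul_bettiNumber_le k
  omega

end DoubleComplex

theorem bettiNumber_eq_bNum {V : Type*} [AddCommGroup V] [Module ℂ V] (Vpq : ℕ → ℕ → Submodule ℂ V)
    (D E : V →ₗ[ℂ] V) : bettiNumber (fun pq => Vpq pq.1 pq.2) D E = bNum Vpq D E := by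
  ext k
  rw [bettiNumber, gradedDim, gradedDim, totalGrading_eq_iSup, bNum]

/-- Angella–Tomassini inequality: for a bounded double complex of finite-dimensional
spaces, `h_BC^k + h_A^k ≥ 2 b_k` for all `k`, with equality for all `k` iff
`ker ∂ ∩ ker δ ∩ Im d = Im ∂δ` (the ∂∂̄-lemma). -/
theorem stmt17 {V : Type*} [AddCommGroup V] [Module ℂ V] [FiniteDimensional ℂ V]
    (Vpq : ℕ → ℕ → Submodule ℂ V)
    (hinternal : DirectSum.IsInternal (fun pq : ℕ × ℕ => Vpq pq.1 pq.2))
    (D E : V →ₗ[ℂ] V)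
    (hDgr : ∀ p q, ∀ x ∈ Vpq p q, D x ∈ Vpq (p + 1) q)
    (hEgr : ∀ p q, ∀ x ∈ Vpq p q, E x ∈ Vpq p (q + 1))
    (hD : D ∘ₗ D = 0) (hE : E ∘ₗ E = 0) (hDE : D ∘ₗ E + E ∘ₗ D = 0) :
    (∀ k : ℕ, 2 * bNum Vpq D E k ≤ bcSum Vpq D E k + aSum Vpq D E k) ∧
    ((∀ k : ℕ, bcSum Vpq D E k + aSum Vpq D E k = 2 * bNum Vpq D E k) ↔
      ker D ⊓ ker E ⊓ range (D + E) = range (D ∘ₗ E)) := by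
  -- `bcSum` and `aSum` are `bottChernNumber` and `aeppliNumber` up to unfolding.
  rw [← bettiNumber_eq_bNum]
  exact stmt17_general hinternal ⟨fun i => hDgr i.1 i.2, fun i => hEgr i.1 i.2, hD, hE, hDE⟩
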